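/- Let D be a finite nonempty index set, c : D × D → ℝ a similarity function, s : D → ℝ a family of nonnegative scores, and λ ∈ [0,1]. Define RS(S) = λ ∑_{i∈D} max_{j∈S} c(i,j) + (1−λ) ∑_{j∈S} s_j for nonempty S ⊆ D. Then RS is monotone increasing on nonempty subsets (nonempty S ⊆ T implies RS(S) ≤ RS(T)) and submodular on nonempty subsets (for nonempty S ⊆ T and x ∉ T, RS(T ∪ {x}) − RS(T) ≤ RS(S ∪ {x}) − RS(S)). -/

import Mathlib

/-
The largest value `m` over `S` grows by `(c i x - m)⁺` when `x` is added to `S`, and this is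
antitone in `m`, hence in `S`; the importance term grows by `s x` whatever `S` is.
Diminishing returns are preserved by sums and by nonnegative multiples.
-/

section IsSubmodular

variable {α ι 𝕜 G : Type*} [DecidableEq α] [AddCommGroup G]

/-- Submodularity of a set function on nonempty finite sets, in the form of diminishing returns. The
domain is a subtype because maxima over the empty set have no value in `G`. -/
def IsSubmodular [LE G] (F : {S : Finset α // S.Nonempty} → G) : Prop :=
  ∀ ⦃S T : {S : Finset α // S.Nonempty}⦄, S ≤ T → ∀ x ∉ T.1,
    F ⟨insert x T.1, T.1.insert_nonempty x⟩ - F T ≤ F ⟨insert x S.1, S.1.insert_nonempty x⟩ - F S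

theorem IsSubmodular.add [Preorder G] [AddLeftMono G]
    {F F' : {S : Finset α // S.Nonempty} → G} (hF : IsSubmodular F) (hF' : IsSubmodular F') :
    IsSubmodular fun S => F S + F' S := by
  intro S T hST x hx
  simpa only [add_sub_add_comm] using add_le_add (hF hST x hx) (hF' hST x hx)

theorem IsSubmodular.const_smul [Preorder G] [Zero 𝕜] [Preorder 𝕜] [DistribSMul 𝕜 G]
    [PosSMulMono 𝕜 G] {F : {S : Finset α // S.Nonempty} → G} (hF : IsSubmodular F) {a : 𝕜}
    (ha : 0 ≤ a) : IsSubmodular fun S => a • F S := by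
  intro S T hST x hx
  simpa only [smul_sub] using smul_le_smul_of_nonneg_left (hF hST x hx) ha

theorem IsSubmodular.sum [Preorder G] [AddLeftMono G] {I : Finset ι}
    {F : ι → {S : Finset α // S.Nonempty} → G} (hF : ∀ i ∈ I, IsSubmodular (F i)) :
    IsSubmodular fun S => ∑ i ∈ I, F i S := by
  intro S T hST x hx
  simpa only [Finset.sum_sub_distrib] using Finset.sum_le_sum fun i hi => hF i hi hST x hx

theorem isSubmodular_finset_sum [Preorder G] (s : α → G) :
    IsSubmodular fun S : {S : Finset α // S.Nonempty} => ∑ j ∈ S.1, s j := by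
  intro S T hST x hxT
  have hxS : x ∉ S.1 := fun hxS => hxT (hST hxS)
  simp only [Finset.sum_insert hxT, Finset.sum_insert hxS, add_sub_cancel_right, le_refl]

theorem antitone_sup_sub_self [Lattice G] [AddLeftMono G] (u : G) :
    Antitone fun m : G => u ⊔ m - m := by
  intro m m' hm
  simpa only [sup_eq_add_posPart_sub, add_sub_cancel_left] using
    posPart_mono (sub_le_sub_left hm u)

theorem isSubmodular_sup' [Lattice G] [AddLeftMono G] (f : α → G) :
    IsSubmodular fun S : {S : Finset α // S.Nonempty} => S.1.sup' S.2 f := by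
  intro S T hST x _
  simpa only [Finset.sup'_insert S.2, Finset.sup'_insert T.2] using
    antitone_sup_sub_self (f x) (Finset.sup'_mono f hST S.2)

end IsSubmodular

section CoresetObjective

variable {α ι 𝕜 G : Type*} [AddCommGroup G] [Lattice G]

/-- The coreset objective `a R(S) + b Î(S)`, with independent weights `a`, `b` in place of `λ`,
`1 - λ`. The set `I` of points to be represented is kept apart from the type `α` of candidate
representatives. -/
def coresetObjective [SMul 𝕜 G] (I : Finset ι) (c : ι → α → G) (s : α → G) (a b : 𝕜)
    (S : {S : Finset α // S.Nonempty}) : G :=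
  a • ∑ i ∈ I, S.1.sup' S.2 (c i) + b • ∑ j ∈ S.1, s j

variable [AddLeftMono G] [Zero 𝕜] [Preorder 𝕜]

theorem monotone_coresetObjective [SMul 𝕜 G] [PosSMulMono 𝕜 G] (I : Finset ι) (c : ι → α → G)
    {s : α → G} (hs : ∀ j, 0 ≤ s j) {a b : 𝕜} (ha : 0 ≤ a) (hb : 0 ≤ b) :
    Monotone (coresetObjective I c s a b) := by
  intro S T hST
  have representation_le : ∑ i ∈ I, S.1.sup' S.2 (c i) ≤ ∑ i ∈ I, T.1.sup' T.2 (c i) :=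
    Finset.sum_le_sum fun i _ => Finset.sup'_mono (c i) hST S.2
  have importance_le : ∑ j ∈ S.1, s j ≤ ∑ j ∈ T.1, s j :=
    Finset.sum_le_sum_of_subset_of_nonneg hST fun j _ _ => hs j
  exact add_le_add (smul_le_smul_of_nonneg_left representation_le ha)
    (smul_le_smul_of_nonneg_left importance_le hb)

theorem isSubmodular_coresetObjective [DecidableEq α] [DistribSMul 𝕜 G] [PosSMulMono 𝕜 G]
    (I : Finset ι) (c : ι → α → G) (s : α → G) {a b : 𝕜} (ha : 0 ≤ a) (hb : 0 ≤ b) :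
    IsSubmodular (coresetObjective I c s a b) :=
  ((IsSubmodular.sum fun i _ => isSubmodular_sup' (c i)).const_smul ha).add
    ((isSubmodular_finset_sum s).const_smul hb)

theorem RS_monotone_and_submodular_general [DecidableEq α] [DistribSMul 𝕜 G] [PosSMulMono 𝕜 G]
    (I : Finset ι) (c : ι → α → G) {s : α → G} (hs : ∀ j, 0 ≤ s j) {a b : 𝕜} (ha : 0 ≤ a)
    (hb : 0 ≤ b) :
    Monotone (coresetObjective I c s a b) ∧ IsSubmodular (coresetObjective I c s a b) :=
  ⟨monotone_coresetObjective I c hs ha hb, isSubmodular_coresetObjective I c s ha hb⟩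

end CoresetObjective

/-- Lemma 1 in the paper's proof of its Theorem 3: the combined coreset
objective `RS(S) = λ ∑_{i∈D} max_{j∈S} c(i,j) + (1−λ) ∑_{j∈S} s_j`, with
`s ≥ 0` and `λ ∈ [0,1]`, is monotone increasing and submodular on nonempty
subsets. -/
theorem RS_monotone_and_submodular {D : Type*} [Fintype D] [Nonempty D]
    [DecidableEq D] (c : D → D → ℝ) (s : D → ℝ) (hs : ∀ j, 0 ≤ s j)
    (lam : ℝ) (hlam0 : 0 ≤ lam) (hlam1 : lam ≤ 1) :
    (∀ (S T : Finset D) (hS : S.Nonempty) (hT : T.Nonempty), S ⊆ T →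
      lam * (∑ i : D, S.sup' hS (fun j => c i j)) + (1 - lam) * (∑ j ∈ S, s j) ≤
        lam * (∑ i : D, T.sup' hT (fun j => c i j)) + (1 - lam) * (∑ j ∈ T, s j)) ∧
    (∀ (S T : Finset D) (hS : S.Nonempty) (hST : S ⊆ T), ∀ x ∉ T,
      (lam * (∑ i : D, (insert x T).sup' (Finset.insert_nonempty x T) (fun j => c i j)) +
          (1 - lam) * (∑ j ∈ insert x T, s j)) -
        (lam * (∑ i : D, T.sup' (hS.mono hST) (fun j => c i j)) +
          (1 - lam) * (∑ j ∈ T, s j)) ≤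
      (lam * (∑ i : D, (insert x S).sup' (Finset.insert_nonempty x S) (fun j => c i j)) +
          (1 - lam) * (∑ j ∈ insert x S, s j)) -
        (lam * (∑ i : D, S.sup' hS (fun j => c i j)) +
          (1 - lam) * (∑ j ∈ S, s j))) := by
  obtain ⟨monotone, submodular⟩ :=
    RS_monotone_and_submodular_general Finset.univ c hs hlam0 (sub_nonneg.mpr hlam1)
  exact ⟨fun S T hS hT hST => @monotone ⟨S, hS⟩ ⟨T, hT⟩ hST,
    fun S T hS hST => @submodular ⟨S, hS⟩ ⟨T, hS.mono hST⟩ hST⟩
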